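/- There is no tile assembly system in the abstract Tile Assembly Model that finitely self-assembles the U fractal 𝐔. That is, for every aTAM tile assembly system 𝒯 = (T, σ, τ) with finite tile set T, finite τ-stable seed σ, and temperature τ, it is not the case that every finite producible assembly of 𝒯 can be extended by single-tile attachments to an assembly whose domain is exactly 𝐔. -/

import Mathlib

/-- A point of the integer lattice `ℤ²`. -/
abbrev Pt := ℤ × ℤ

/-- The generator of the U fractal. -/
def GU : Set Pt := {(0,0),(0,1),(0,2),(1,0),(2,0),(2,1),(2,2)}

/-- `scaleAddU k A B = A + k·B` (componentwise). -/
def scaleAddU (k : ℤ) (A B : Set Pt) : Set Pt :=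
  {q | ∃ p ∈ A, ∃ g ∈ B, q = (p.1 + k * g.1, p.2 + k * g.2)}

/-- The stages of the U fractal: `ustage 1 = GU` and
`ustage (i+1) = ustage i + 3^i · GU` for `i ≥ 1`. -/
def ustage : ℕ → Set Pt
  | 0 => ∅
  | 1 => GU
  | n + 2 => scaleAddU (3 ^ (n + 1)) (ustage (n + 1)) GU

/-- The U fractal `𝐔 = ⋃_{i ≥ 1} u_i`. -/
def UFractal : Set Pt := {p | ∃ i : ℕ, 1 ≤ i ∧ p ∈ ustage i}

/-- A tile type: a glue (label, drawn from `ℕ`) on each of its four sides.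
The strength of a glue label is given by a strength function. -/
structure TileType where
  north : ℕ
  east : ℕ
  south : ℕ
  west : ℕ
deriving DecidableEq

/-- An assembly: a partial function from `ℤ²` to tile types. -/
abbrev Assembly := Pt → Option TileType

/-- The domain of an assembly. -/
def adom (α : Assembly) : Set Pt := {p | α p ≠ none}

/-- The strength of the bond between the tiles of `α` at positions `p` and `q`
(zero unless `q` is adjacent to `p`, both are tiled, and the abutting glues match). -/
def bond (s : ℕ → ℕ) (α : Assembly) (p q : Pt) : ℕ :=
  match α p, α q with
  | some t, some t' =>
      if q = (p.1 + 1, p.2) then (if t.east = t'.west then s t.east else 0)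
      else if q = (p.1 - 1, p.2) then (if t.west = t'.east then s t.west else 0)
      else if q = (p.1, p.2 + 1) then (if t.north = t'.south then s t.north else 0)
      else if q = (p.1, p.2 - 1) then (if t.south = t'.north then s t.south else 0)
      else 0
  | _, _ => 0

/-- `α` is `τ`-stable: every cut of its binding graph has total glue strength at
least `τ` (witnessed by finitely many bonds crossing the cut). -/
def IsStable (s : ℕ → ℕ) (τ : ℕ) (α : Assembly) : Prop :=
  ∀ A B : Set Pt, A ∪ B = adom α → Disjoint A B → A.Nonempty → B.Nonempty →
    ∃ F : Finset (Pt × Pt), (∀ e ∈ F, e.1 ∈ A ∧ e.2 ∈ B) ∧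
      τ ≤ ∑ e ∈ F, bond s α e.1 e.2

/-- The total strength with which a tile of type `t` placed at the empty position `p`
would bind to its already-placed neighbors in `α`. -/
def attachStrength (s : ℕ → ℕ) (α : Assembly) (p : Pt) (t : TileType) : ℕ :=
  (match α (p.1 + 1, p.2) with
    | some t' => if t.east = t'.west then s t.east else 0
    | none => 0) +
  (match α (p.1 - 1, p.2) with
    | some t' => if t.west = t'.east then s t.west else 0
    | none => 0) +
  (match α (p.1, p.2 + 1) with
    | some t' => if t.north = t'.south then s t.north else 0
    | none => 0) +
  (match α (p.1, p.2 - 1) with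
    | some t' => if t.south = t'.north then s t.south else 0
    | none => 0)

/-- An aTAM tile assembly system `𝒯 = (T, σ, τ)`: a glue strength function, a finite
tile set, a finite `τ`-stable seed assembly, and a temperature `τ`. -/
structure TAS where
  strength : ℕ → ℕ
  tiles : Finset TileType
  seed : Assembly
  temp : ℕ
  seed_finite : (adom seed).Finite
  seed_tiles : ∀ p t, seed p = some t → t ∈ tiles
  seed_stable : IsStable strength temp seed

/-- A single-tile attachment step: a tile of the system attaches at an empty
position with total binding strength at least the temperature. -/
def Step (S : TAS) (α β : Assembly) : Prop :=
  ∃ p t, t ∈ S.tiles ∧ α p = none ∧ S.temp ≤ attachStrength S.strength α p t ∧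
    β = Function.update α p (some t)

/-- `β` is the result of a (finite or infinite) sequence of single-tile attachment
steps starting from `α`. -/
def ReachesFrom (S : TAS) (α β : Assembly) : Prop :=
  ∃ c : ℕ → Assembly, c 0 = α ∧ (∀ n, c (n + 1) = c n ∨ Step S (c n) (c (n + 1))) ∧
    (∀ p n t, c n p = some t → β p = some t) ∧
    (∀ p t, β p = some t → ∃ n, c n p = some t)

/-- A producible assembly: the result of a (finite or infinite) sequence of
single-tile attachment steps starting from the seed. -/
def Producible (S : TAS) (α : Assembly) : Prop := ReachesFrom S S.seed α

/-- A terminal assembly: no tile can attach to it. -/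
def Terminal (S : TAS) (α : Assembly) : Prop := ∀ β, ¬ Step S α β

/-- `S` finitely self-assembles `X` if every finite producible assembly of `S` can be
extended, by a (finite or infinite) sequence of single-tile attachment steps, to an
assembly whose domain is exactly `X`. -/
def FinitelySelfAssembles (S : TAS) (X : Set Pt) : Prop :=
  ∀ α, Producible S α → (adom α).Finite →
    ∃ β, ReachesFrom S α β ∧ adom β = X

/-- `S` strictly self-assembles `X` if every producible terminal assembly of `S`
has domain exactly `X`. -/
def StrictlySelfAssembles (S : TAS) (X : Set Pt) : Prop :=
  ∀ α, Producible S α → Terminal S α → adom α = X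


/-! ## Geometry of the U fractal -/

theorem mem_GU_iff (g : Pt) : g ∈ GU ↔
    0 ≤ g.1 ∧ g.1 < 3 ∧ 0 ≤ g.2 ∧ g.2 < 3 ∧ ¬ (g.1 = 1 ∧ g.2 ≠ 0) := by
  obtain ⟨x, y⟩ := g
  simp only [GU, Set.mem_insert_iff, Set.mem_singleton_iff, Prod.mk.injEq]
  omega

theorem digit_low (p g : ℤ) (i n : ℕ) (h : i < n) :
    (p + 3 ^ n * g) / 3 ^ i % 3 = p / 3 ^ i % 3 := by
  obtain ⟨d, rfl⟩ := Nat.exists_eq_add_of_lt h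
  have h3 : (3 : ℤ) ^ i ≠ 0 := by positivity
  have : p + 3 ^ (i + d + 1) * g = p + 3 ^ i * (3 * (3 ^ d * g)) := by ring
  rw [this, Int.add_mul_ediv_left _ _ h3]
  omega

theorem digit_eq (x v u : ℤ) (i : ℕ) (h : x = 3 ^ i * u + v) (h0 : 0 ≤ v) (h1 : v < 3 ^ i) :
    x / 3 ^ i = u := by
  have h3 : (3 : ℤ) ^ i ≠ 0 := by positivity
  rw [h, add_comm, Int.add_mul_ediv_left _ _ h3, Int.ediv_eq_zero_of_lt h0 h1, zero_add]

theorem mem_ustage_iff (n : ℕ) : ∀ p : Pt, p ∈ ustage (n + 1) ↔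
    0 ≤ p.1 ∧ p.1 < 3 ^ (n + 1) ∧ 0 ≤ p.2 ∧ p.2 < 3 ^ (n + 1) ∧
      ∀ i ≤ n, ¬ (p.1 / 3 ^ i % 3 = 1 ∧ p.2 / 3 ^ i % 3 ≠ 0) := by
  induction n with
  | zero =>
    intro p
    simp only [ustage, mem_GU_iff]
    simp
    intros
    omega
  | succ n ih =>
    intro p
    have hpos : (0 : ℤ) < 3 ^ (n + 1) := by positivity
    have hs : (3 : ℤ) ^ (n + 1 + 1) = 3 * 3 ^ (n + 1) := by ring
    simp only [ustage, scaleAddU, Set.mem_ofPred_eq]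
    constructor
    · rintro ⟨q, hq, g, hg, rfl⟩
      rw [ih] at hq
      rw [mem_GU_iff] at hg
      obtain ⟨q1, q2, q3, q4, q5⟩ := hq
      obtain ⟨g1, g2, g3, g4, g5⟩ := hg
      refine ⟨by positivity, ?_, by positivity, ?_, ?_⟩
      · rw [hs]; nlinarith
      · rw [hs]; nlinarith
      · intro i hi
        dsimp only
        rcases Nat.lt_or_ge i (n + 1) with h | h
        · rw [digit_low _ _ _ _ h, digit_low _ _ _ _ h]
          exact q5 i (by omega)
        · have : i = n + 1 := by omega
          subst this
          rw [digit_eq _ q.1 g.1 (n + 1) (by ring) q1 q2, digit_eq _ q.2 g.2 (n + 1) (by ring) q3 q4]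
          omega
    · rintro ⟨h1, h2, h3, h4, h5⟩
      have e1 := Int.emod_add_mul_ediv p.1 (3 ^ (n + 1))
      have e2 := Int.emod_add_mul_ediv p.2 (3 ^ (n + 1))
      have b1 := Int.emod_nonneg p.1 hpos.ne'
      have b2 := Int.emod_nonneg p.2 hpos.ne'
      have b3 := Int.emod_lt_of_pos p.1 hpos
      have b4 := Int.emod_lt_of_pos p.2 hpos
      refine ⟨(p.1 % 3 ^ (n + 1), p.2 % 3 ^ (n + 1)), ?_,
        (p.1 / 3 ^ (n + 1), p.2 / 3 ^ (n + 1)), ?_, ?_⟩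
      · rw [ih]
        refine ⟨b1, b3, b2, b4, ?_⟩
        intro i hi
        have := h5 i (by omega)
        rw [← e1, ← e2, digit_low _ _ _ _ (by omega), digit_low _ _ _ _ (by omega)] at this
        exact this
      · rw [mem_GU_iff]
        have c1 : p.1 / 3 ^ (n + 1) < 3 := Int.ediv_lt_of_lt_mul hpos (by linarith)
        have c2 : p.2 / 3 ^ (n + 1) < 3 := Int.ediv_lt_of_lt_mul hpos (by linarith)
        have c3 : 0 ≤ p.1 / 3 ^ (n + 1) := Int.ediv_nonneg h1 hpos.le
        have c4 : 0 ≤ p.2 / 3 ^ (n + 1) := Int.ediv_nonneg h3 hpos.le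
        have := h5 (n + 1) le_rfl
        refine ⟨c3, c1, c4, c2, ?_⟩
        dsimp only
        omega
      · ext
        · exact e1.symm
        · exact e2.symm

theorem lt_three_pow (x : ℤ) (i : ℕ) (h : x ≤ i) : x < 3 ^ i := by
  have : i < 3 ^ i := Nat.lt_pow_self (by norm_num)
  have : (i : ℤ) < 3 ^ i := by exact_mod_cast this
  linarith

/-- Membership in the U fractal in terms of ternary digits. -/
theorem mem_U_iff (p : Pt) : p ∈ UFractal ↔ 0 ≤ p.1 ∧ 0 ≤ p.2 ∧
    ∀ i : ℕ, ¬ (p.1 / 3 ^ i % 3 = 1 ∧ p.2 / 3 ^ i % 3 ≠ 0) := by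
  constructor
  · rintro ⟨j, hj, hp⟩
    obtain ⟨n, rfl⟩ : ∃ n, j = n + 1 := ⟨j - 1, by omega⟩
    rw [mem_ustage_iff] at hp
    obtain ⟨h1, h2, h3, h4, h5⟩ := hp
    refine ⟨h1, h3, fun i => ?_⟩
    rcases Nat.lt_or_ge n i with h | h
    · have : (3 : ℤ) ^ (n + 1) ≤ 3 ^ i := pow_le_pow_right₀ (by norm_num) h
      rw [Int.ediv_eq_zero_of_lt h3 (by linarith)]
      simp
    · exact h5 i h
  · rintro ⟨h1, h2, h3⟩
    refine ⟨(p.1 + p.2).toNat + 1, by omega, ?_⟩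
    rw [mem_ustage_iff]
    refine ⟨h1, lt_three_pow _ _ ?_, h2, lt_three_pow _ _ ?_, fun i _ => h3 i⟩ <;> push_cast <;> omega

theorem not_mem_U (x y u v w v' : ℤ) (i : ℕ) (hx : x = 3 ^ i * u + v) (h0 : 0 ≤ v)
    (h1 : v < 3 ^ i) (hy : y = 3 ^ i * w + v') (h0' : 0 ≤ v') (h1' : v' < 3 ^ i)
    (hu : u % 3 = 1) (hw : w % 3 ≠ 0) : (x, y) ∉ UFractal := by
  intro h
  rw [mem_U_iff] at h
  apply h.2.2 i
  dsimp only
  rw [digit_eq x v u i hx h0 h1, digit_eq y v' w i hy h0' h1']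
  exact ⟨hu, hw⟩

/-- The number with `k` ternary digits, all equal to one. -/
def mid : ℕ → ℤ
  | 0 => 0
  | k + 1 => 3 * mid k + 1

theorem mid_spec (k : ℕ) : (3 : ℤ) ^ k = 2 * mid k + 1 := by
  induction k with
  | zero => simp [mid]
  | succ k ih => rw [pow_succ, ih, mid]; ring

theorem mid_nonneg (k : ℕ) : 0 ≤ mid k := by
  induction k with
  | zero => simp [mid]
  | succ k ih => rw [mid]; linarith

theorem mid_lt {i j : ℕ} (h : i < j) : mid i < mid j := by
  have : (3 : ℤ) ^ i < 3 ^ j := pow_lt_pow_right₀ (by norm_num) h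
  rw [mid_spec, mid_spec] at this
  linarith

theorem mid_le {i j : ℕ} (h : i ≤ j) : mid i ≤ mid j := by
  rcases h.lt_or_eq with h | rfl
  · exact (mid_lt h).le
  · rfl

/-- If the low `j` digits of `x` are all ones then the low `j` digits of `y` are zeros. -/
theorem low_zero (x y : ℤ) (h : (x, y) ∈ UFractal) (j : ℕ) :
    ∀ q, x = 3 ^ j * q + mid j → ∃ w, y = 3 ^ j * w := by
  induction j with
  | zero => intro q _; exact ⟨y, by simp⟩
  | succ j ih =>
    intro q hq
    have hs : (3 : ℤ) ^ (j + 1) = 3 * 3 ^ j := by ring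
    have hm := mid_spec j
    have hx : x = 3 ^ j * (3 * q + 1) + mid j := by rw [hq, hs, mid, hm]; ring
    obtain ⟨w, hw⟩ := ih _ hx
    by_cases h3 : w % 3 = 0
    · refine ⟨w / 3, ?_⟩
      rw [hw, hs]
      have : w = 3 * (w / 3) := by omega
      calc 3 ^ j * w = 3 ^ j * (3 * (w / 3)) := by rw [← this]
        _ = _ := by ring
    · exfalso
      refine not_mem_U x y (3 * q + 1) (mid j) w 0 j hx (mid_nonneg j) ?_ (by rw [hw]; ring) le_rfl
        (by positivity) (by omega) h3 h
      have := mid_nonneg j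
      linarith

theorem axis_mem_U (x : ℤ) (h : 0 ≤ x) : (x, (0 : ℤ)) ∈ UFractal := by
  rw [mem_U_iff]
  exact ⟨h, le_rfl, fun i => by simp⟩

theorem row_mem_U (x u : ℤ) (k : ℕ) (h : 0 ≤ x) (v : ℤ) (hx : x = 3 ^ k * u + v) (h0 : 0 ≤ v)
    (h1 : v < 3 ^ k) (hu : u % 3 ≠ 1) : (x, (3 : ℤ) ^ k) ∈ UFractal := by
  rw [mem_U_iff]
  refine ⟨h, by positivity, fun i => ?_⟩
  rintro ⟨h2, h3⟩
  dsimp only at h2 h3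
  rcases lt_trichotomy i k with hi | rfl | hi
  · have := digit_low 0 1 i k hi
    simp at this
    omega
  · rw [digit_eq x v u i hx h0 h1] at h2
    exact hu h2
  · rw [Int.ediv_eq_zero_of_lt (by positivity) (pow_lt_pow_right₀ (by norm_num) hi)] at h3
    simp at h3

/-- The rungs. -/
def rho (k : ℕ) (e h : ℤ) : Pt := (4 * 3 ^ k + mid k + e * 3 ^ k, h * 3 ^ k)

/-- The (relative) box to the `-e` side of a rung. -/
def Box (k : ℕ) (e : ℤ) : Set Pt :=
  {r | 0 < -e * r.1 ∧ -e * r.1 < 3 ^ k ∧ 0 ≤ r.2 ∧ r.2 < 3 ^ k}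

/-- The four directions. -/
def IsDir (d : Pt) : Prop := d = (1, 0) ∨ d = (-1, 0) ∨ d = (0, 1) ∨ d = (0, -1)

/-- Sign. -/
def IsSign (e : ℤ) : Prop := e = 1 ∨ e = -1

/-- In the upper bands, only half of the box is in `U`. -/
theorem free_side (k : ℕ) (e h : ℤ) (he : IsSign e) (hh : h = 1 ∨ h = 2) (r : Pt)
    (hr1 : mid k < -e * r.1) (hr2 : -e * r.1 < 3 ^ k) (h0 : 0 ≤ r.2) (h1 : r.2 < 3 ^ k) :
    rho k e h + r ∉ UFractal := by
  have hm := mid_spec k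
  obtain ⟨x, y⟩ := r
  dsimp only at *
  simp only [rho, Prod.mk_add_mk]
  rcases he with rfl | rfl
  · refine not_mem_U _ _ 4 (3 ^ k + mid k + x) h y k (by ring) ?_ ?_ (by ring) h0 h1
      (by norm_num) (by omega) <;> linarith
  · refine not_mem_U _ _ 4 (mid k + x - 3 ^ k) h y k (by ring) ?_ ?_ (by ring) h0 h1
      (by norm_num) (by omega) <;> linarith

/-- Near the rung, the bands do not touch. -/
theorem bands_apart (k : ℕ) (e h : ℤ) (he : IsSign e) (r : Pt)
    (hr1 : 0 < -e * r.1) (hr2 : -e * r.1 ≤ mid k) (h1 : r.2 = 3 ^ (k + 1) - 1) :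
    rho (k + 1) e h + r ∉ UFractal := by
  have hm := mid_spec k
  have hn := mid_nonneg k
  have hs : (3 : ℤ) ^ (k + 1) = 3 * 3 ^ k := by ring
  obtain ⟨x, y⟩ := r
  dsimp only at *
  subst h1
  simp only [rho, Prod.mk_add_mk, mid, hs]
  rcases he with rfl | rfl
  · refine not_mem_U _ _ 16 (mid k + x) (3 * h + 2) (3 ^ k - 1) k (by rw [hm]; ring) ?_ ?_
      (by ring) ?_ ?_ (by norm_num) (by omega) <;> linarith
  · refine not_mem_U _ _ 10 (mid k + x) (3 * h + 2) (3 ^ k - 1) k (by rw [hm]; ring) ?_ ?_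
      (by ring) ?_ ?_ (by norm_num) (by omega) <;> linarith

theorem mid_add (i d : ℕ) : mid (i + d) = mid i + 3 ^ i * mid d := by
  have h1 := mid_spec (i + d)
  have h2 := mid_spec i
  have h3 := mid_spec d
  rw [pow_add, h3] at h1
  nlinarith

/-- No exit upwards at a smaller scale. -/
theorem no_up (i d : ℕ) (e h : ℤ) (he : IsSign e) (r : Pt)
    (hr1 : 0 < -e * r.1) (hr2 : -e * r.1 ≤ mid i) (h1 : r.2 = 3 ^ i) :
    rho (i + (d + 1)) e h + r ∉ UFractal := by
  have hm := mid_spec i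
  have hn := mid_nonneg i
  obtain ⟨x, y⟩ := r
  dsimp only at *
  subst h1
  have hadd := mid_add i (d + 1)
  simp only [rho, Prod.mk_add_mk, hadd]
  simp only [mid]
  rcases he with rfl | rfl
  · refine not_mem_U _ _ (5 * 3 ^ (d + 1) + (3 * mid d + 1)) (mid i + x) (h * 3 ^ (d + 1) + 1) 0 i
      (by ring) ?_ ?_ (by ring) le_rfl (by positivity) (by rw [pow_succ]; omega) ?_
    · linarith
    · linarith
    · rw [pow_succ, ← mul_assoc]; omega
  · refine not_mem_U _ _ (3 * 3 ^ (d + 1) + (3 * mid d + 1)) (mid i + x) (h * 3 ^ (d + 1) + 1) 0 i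
      (by ring) ?_ ?_ (by ring) le_rfl (by positivity) (by rw [pow_succ]; omega) ?_
    · linarith
    · linarith
    · rw [pow_succ, ← mul_assoc]; omega

/-- Which neighbours of a cell of a band are in `U`. -/
theorem nbr (k : ℕ) (e h : ℤ) (he : IsSign e) (hh : h = 0 ∨ h = 1 ∨ h = 2) (r d : Pt)
    (hr : r ∈ Box k e) (hd : IsDir d) (hU : rho k e h + r + d ∈ UFractal) :
    r + d ∈ Box k e ∨ r + d = 0 ∨ (h = 0 ∧ r + d = (-e * 3 ^ k, 0)) ∨
      (d = (0, 1) ∧ r.2 = 3 ^ k - 1 ∧ h ≤ 1) ∨ (d = (0, -1) ∧ r.2 = 0 ∧ 1 ≤ h) := by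
  have hm := mid_spec k
  have hn := mid_nonneg k
  obtain ⟨x, y⟩ := r
  obtain ⟨dx, dy⟩ := d
  simp only [Box, Set.mem_ofPred_eq, rho, Prod.mk_add_mk, Prod.mk.injEq, Prod.mk_eq_zero, IsDir] at *
  have hU0 := (mem_U_iff _).1 hU
  dsimp only at hU0
  have hs : (3 : ℤ) ^ (k + 1) = 3 * 3 ^ k := by ring
  -- top
  have top : h = 2 → y + dy = 3 ^ k → False := by
    intro h2 h3
    rcases he with rfl | rfl
    · refine not_mem_U _ _ 1 (2 * 3 ^ k + mid k + (x + dx)) 1 0 (k + 1) ?_ ?_ ?_ ?_ le_rfl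
        (by positivity) (by norm_num) (by norm_num) hU
      · rw [hs]; ring
      · omega
      · omega
      · rw [hs, h2]; linarith
    · refine not_mem_U _ _ 1 (mid k + (x + dx)) 1 0 (k + 1) ?_ ?_ ?_ ?_ le_rfl
        (by positivity) (by norm_num) (by norm_num) hU
      · rw [hs]; ring
      · omega
      · omega
      · rw [hs, h2]; linarith
  -- rung column
  have col0 : x + dx = 0 → 0 ≤ y + dy → y + dy < 3 ^ k → y + dy = 0 := by
    intro h1 h2 h3
    obtain ⟨w, hw⟩ := low_zero _ _ hU k (4 + e) (by linear_combination h1)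
    have h4 : y + dy = 3 ^ k * (w - h) := by linarith
    have h5 : w - h < 1 := by
      by_contra hc
      nlinarith
    have h6 : -1 < w - h := by
      by_contra hc
      nlinarith
    have : w - h = 0 := by omega
    rw [h4, this, mul_zero]
  have colV : x + dx = -e * 3 ^ k → 0 ≤ y + dy → y + dy < 3 ^ k → h = 0 ∧ y + dy = 0 := by
    intro h1 h2 h3
    obtain ⟨w, hw⟩ := low_zero _ _ hU (k + 1) 1 (by rw [hs, mid]; linear_combination h1 + hm)
    rw [hs] at hw
    have hw1 : w < 1 := by
      by_contra hc
      have : 3 ^ k * 1 ≤ 3 ^ k * w := mul_le_mul_of_nonneg_left (by omega) (by positivity)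
      rcases hh with rfl | rfl | rfl <;> linarith
    have hw2 : -1 < w := by
      by_contra hc
      have : 3 ^ k * w ≤ 3 ^ k * (-1) := mul_le_mul_of_nonneg_left (by omega) (by positivity)
      rcases hh with rfl | rfl | rfl <;> linarith
    have hw3 : w = 0 := by omega
    rw [hw3, mul_zero] at hw
    rcases hh with rfl | rfl | rfl
    · exact ⟨rfl, by linarith⟩
    · exfalso; linarith
    · exfalso; linarith
  obtain ⟨-, hU2, -⟩ := hU0
  clear hU hs
  generalize (3 : ℤ) ^ k = a at *
  rcases hd with ⟨rfl, rfl⟩ | ⟨rfl, rfl⟩ | ⟨rfl, rfl⟩ | ⟨rfl, rfl⟩ <;>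
    rcases he with rfl | rfl <;> rcases hh with rfl | rfl | rfl <;> try omega
  all_goals
    by_cases hy : y = a - 1
    · exact (top rfl (by omega)).elim
    · omega

/-! ## Assemblies -/

theorem attach_mono (s : ℕ → ℕ) (α γ : Assembly) (z r : Pt) (t : TileType)
    (h : ∀ d, IsDir d → ∀ u, α (z + d) = some u → γ (r + d) = some u) :
    attachStrength s α z t ≤ attachStrength s γ r t := by
  have h1 : ∀ u, α (z.1 + 1, z.2) = some u → γ (r.1 + 1, r.2) = some u := by
    simpa [Prod.add_def] using h (1, 0) (Or.inl rfl)
  have h2 : ∀ u, α (z.1 - 1, z.2) = some u → γ (r.1 - 1, r.2) = some u := by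
    simpa [Prod.add_def, ← sub_eq_add_neg] using h (-1, 0) (Or.inr (Or.inl rfl))
  have h3 : ∀ u, α (z.1, z.2 + 1) = some u → γ (r.1, r.2 + 1) = some u := by
    simpa [Prod.add_def] using h (0, 1) (Or.inr (Or.inr (Or.inl rfl)))
  have h4 : ∀ u, α (z.1, z.2 - 1) = some u → γ (r.1, r.2 - 1) = some u := by
    simpa [Prod.add_def, ← sub_eq_add_neg] using h (0, -1) (Or.inr (Or.inr (Or.inr rfl)))
  unfold attachStrength
  refine add_le_add (add_le_add (add_le_add ?_ ?_) ?_) ?_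
  · cases hc : α (z.1 + 1, z.2) with
    | none => simp
    | some u => rw [h1 u hc]
  · cases hc : α (z.1 - 1, z.2) with
    | none => simp
    | some u => rw [h2 u hc]
  · cases hc : α (z.1, z.2 + 1) with
    | none => simp
    | some u => rw [h3 u hc]
  · cases hc : α (z.1, z.2 - 1) with
    | none => simp
    | some u => rw [h4 u hc]

theorem attach_pos (s : ℕ → ℕ) (α : Assembly) (z : Pt) (t : TileType)
    (h : 0 < attachStrength s α z t) : ∃ d, IsDir d ∧ α (z + d) ≠ none := by
  by_contra hc
  push Not at hc
  have := attach_mono s α (fun _ => none) z z t (fun d hd u hu => by rw [hc d hd] at hu; cases hu)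
  have h0 : attachStrength s (fun _ => none) z t = 0 := by simp [attachStrength]
  omega

/-- Finite reachability from the seed. -/
def Reach (S : TAS) (α : Assembly) : Prop := Relation.ReflTransGen (Step S) S.seed α

/-- A sequence of (possibly trivial) steps. -/
def IsSeq (S : TAS) (c : ℕ → Assembly) : Prop := ∀ n, c (n + 1) = c n ∨ Step S (c n) (c (n + 1))

theorem step_mono {S : TAS} {α β : Assembly} (h : Step S α β) {p : Pt} {t : TileType}
    (hp : α p = some t) : β p = some t := by
  obtain ⟨q, u, -, hq, -, rfl⟩ := h
  have : p ≠ q := by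
    rintro rfl
    rw [hq] at hp
    cases hp
  rw [Function.update_of_ne this]
  exact hp

theorem seq_mono {S : TAS} {c : ℕ → Assembly} (hc : IsSeq S c) {m n : ℕ} (hmn : m ≤ n) {p : Pt}
    {t : TileType} (hp : c m p = some t) : c n p = some t := by
  induction n, hmn using Nat.le_induction with
  | base => exact hp
  | succ n _ ih =>
    rcases hc n with h | h
    · rw [h]; exact ih
    · exact step_mono h ih

theorem seq_mono_ne {S : TAS} {c : ℕ → Assembly} (hc : IsSeq S c) {m n : ℕ} (hmn : m ≤ n) {p : Pt}
    (hp : c m p ≠ none) : c n p ≠ none := by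
  obtain ⟨t, ht⟩ := Option.ne_none_iff_exists'.1 hp
  rw [seq_mono hc hmn ht]
  simp

theorem reach_seq {S : TAS} {α : Assembly} (h : Reach S α) :
    ∃ (c : ℕ → Assembly) (N : ℕ), c 0 = S.seed ∧ IsSeq S c ∧ ∀ n, N ≤ n → c n = α := by
  induction h with
  | refl => exact ⟨fun _ => S.seed, 0, rfl, fun _ => Or.inl rfl, fun _ _ => rfl⟩
  | tail _ hst ih =>
    rename_i β γ _
    obtain ⟨c, N, h0, h1, h2⟩ := ih
    refine ⟨fun n => if n ≤ N then c n else γ, N + 1, by simp [h0], ?_, ?_⟩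
    · intro n
      rcases lt_trichotomy n N with h | h | h
      · have e1 : n ≤ N := h.le
        have e2 : n + 1 ≤ N := h
        simp only [e1, e2, if_true]
        exact h1 n
      · subst h
        right
        have e2 : ¬ (n + 1 ≤ n) := by omega
        simp only [le_refl, e2, if_true, if_false]
        rw [h2 n le_rfl]
        exact hst
      · left
        have e1 : ¬ n ≤ N := by omega
        have e2 : ¬ (n + 1 ≤ N) := by omega
        simp only [e1, e2, if_false]
    · intro n hn
      have e1 : ¬ n ≤ N := by omega
      simp only [e1, if_false]

theorem reach_producible {S : TAS} {α : Assembly} (h : Reach S α) : Producible S α := by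
  obtain ⟨c, N, h0, h1, h2⟩ := reach_seq h
  refine ⟨c, h0, h1, ?_, ?_⟩
  · intro p n t hp
    have := seq_mono h1 (le_max_left n N) hp
    rwa [h2 _ (le_max_right n N)] at this
  · intro p t hp
    exact ⟨N, by rw [h2 N le_rfl]; exact hp⟩

theorem reach_finite {S : TAS} {α : Assembly} (h : Reach S α) : (adom α).Finite := by
  induction h with
  | refl => exact S.seed_finite
  | tail _ hst ih =>
    obtain ⟨q, u, -, -, -, rfl⟩ := hst
    refine (ih.insert q).subset ?_
    intro p hp
    by_cases hpq : p = q
    · exact Or.inl hpq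
    · right
      rw [adom, Set.mem_ofPred_eq, Function.update_of_ne hpq] at hp
      exact hp

theorem reach_tiles {S : TAS} {α : Assembly} (h : Reach S α) :
    ∀ p t, α p = some t → t ∈ S.tiles := by
  induction h with
  | refl => exact S.seed_tiles
  | tail _ hst ih =>
    obtain ⟨q, u, hu, -, -, rfl⟩ := hst
    intro p t hp
    by_cases hpq : p = q
    · subst hpq
      rw [Function.update_self] at hp
      cases hp
      exact hu
    · rw [Function.update_of_ne hpq] at hp
      exact ih p t hp

theorem reach_sub {S : TAS} (hF : FinitelySelfAssembles S UFractal) {α : Assembly}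
    (h : Reach S α) {p : Pt} (hp : α p ≠ none) : p ∈ UFractal := by
  obtain ⟨β, ⟨c, h0, -, h2, -⟩, hβ⟩ := hF α (reach_producible h) (reach_finite h)
  obtain ⟨t, ht⟩ := Option.ne_none_iff_exists'.1 hp
  rw [← hβ]
  have := h2 p 0 t (by rw [h0]; exact ht)
  change β p ≠ none
  rw [this]
  simp

theorem seq_reach {S : TAS} {c : ℕ → Assembly} (hc : IsSeq S c) (h0 : c 0 = S.seed) (n : ℕ) :
    Reach S (c n) := by
  induction n with
  | zero => rw [h0]; exact Relation.ReflTransGen.refl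
  | succ n ih =>
    rcases hc n with h | h
    · rw [h]; exact ih
    · exact Relation.ReflTransGen.tail ih h

/-- If `p` gets tiled at step `n`, it is by an attachment at `p`. -/
theorem step_at {S : TAS} {c : ℕ → Assembly} (hc : IsSeq S c) {n : ℕ} {p : Pt}
    (h1 : c n p = none) (h2 : c (n + 1) p ≠ none) :
    ∃ t, t ∈ S.tiles ∧ S.temp ≤ attachStrength S.strength (c n) p t ∧
      c (n + 1) = Function.update (c n) p (some t) := by
  rcases hc n with h | ⟨q, t, ht, hq, ha, he⟩
  · rw [h] at h2; exact absurd h1 h2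
  · by_cases hpq : p = q
    · subst hpq
      exact ⟨t, ht, ha, he⟩
    · rw [he, Function.update_of_ne hpq] at h2
      exact absurd h1 h2

theorem first_place {c : ℕ → Assembly} {p : Pt} (h0 : c 0 p = none) {N : ℕ}
    (h : c N p ≠ none) : ∃ n, c n p = none ∧ c (n + 1) p ≠ none := by
  induction N with
  | zero => exact absurd h0 h
  | succ N ih =>
    by_cases hN : c N p = none
    · exact ⟨N, hN, h⟩
    · exact ih hN

/-! ## Growth from a single tile -/

/-- Growth from the single tile `t` at the origin, inside the set `X`. -/
inductive PGrow (S : TAS) (X : Set Pt) (t : TileType) : Assembly → Prop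
  | base : PGrow S X t (Function.update (fun _ => none) 0 (some t))
  | step (γ : Assembly) (r : Pt) (t' : TileType) (h : PGrow S X t γ) (h0 : γ r = none)
      (hX : r ∈ X) (ht : t' ∈ S.tiles) (ha : S.temp ≤ attachStrength S.strength γ r t') :
      PGrow S X t (Function.update γ r (some t'))

theorem PGrow.mono {S : TAS} {X Y : Set Pt} {t : TileType} {γ : Assembly} (h : PGrow S X t γ)
    (hXY : X ⊆ Y) : PGrow S Y t γ := by
  induction h with
  | base => exact PGrow.base
  | step γ r t' _ h0 hX ht ha ih => exact PGrow.step γ r t' ih h0 (hXY hX) ht ha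

theorem PGrow.dom {S : TAS} {X : Set Pt} {t : TileType} {γ : Assembly} (h : PGrow S X t γ) :
    ∀ r, γ r ≠ none → r = 0 ∨ r ∈ X := by
  induction h with
  | base =>
    intro r hr
    by_cases h : r = 0
    · exact Or.inl h
    · rw [Function.update_of_ne h] at hr
      exact absurd rfl hr
  | step γ q t' _ h0 hX ht ha ih =>
    intro r hr
    by_cases h : r = q
    · subst h; exact Or.inr hX
    · rw [Function.update_of_ne h] at hr
      exact ih r hr

theorem PGrow.transplant {S : TAS} {X : Set Pt} {t : TileType} {γ : Assembly}
    (h : PGrow S X t γ) {α : Assembly} (hα : Reach S α) {ρ : Pt} (hρ : α ρ = some t)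
    (hX : ∀ r ∈ X, α (ρ + r) = none) :
    ∃ α', Reach S α' ∧ (∀ r u, γ r = some u → α' (ρ + r) = some u) ∧
      (∀ r, γ r = none → α' (ρ + r) = α (ρ + r)) := by
  induction h with
  | base =>
    refine ⟨α, hα, ?_, fun _ _ => rfl⟩
    intro r u hr
    by_cases h : r = 0
    · subst h
      rw [Function.update_self] at hr
      rw [add_zero, hρ, hr]
    · rw [Function.update_of_ne h] at hr
      cases hr
  | step γ q t' _ h0 hqX ht ha ih =>
    obtain ⟨α', hr, h1, h2⟩ := ih
    have hq : α' (ρ + q) = none := by rw [h2 q h0]; exact hX q hqX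
    refine ⟨Function.update α' (ρ + q) (some t'), ?_, ?_, ?_⟩
    · refine Relation.ReflTransGen.tail hr ⟨ρ + q, t', ht, hq, le_trans ha ?_, rfl⟩
      refine attach_mono _ _ _ _ _ _ ?_
      intro d _ u hu
      rw [add_assoc]
      exact h1 _ _ hu
    · intro r u hu
      by_cases h : r = q
      · subst h
        rw [Function.update_self] at hu ⊢
        exact hu
      · rw [Function.update_of_ne h] at hu
        rw [Function.update_of_ne (by simpa using h)]
        exact h1 r u hu
    · intro r hu
      by_cases h : r = q
      · subst h
        rw [Function.update_self] at hu
        cases hu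
      · rw [Function.update_of_ne h] at hu
        rw [Function.update_of_ne (by simpa using h)]
        exact h2 r hu

/-- A growth with a further attachment at `z`, transplanted, must stay inside `U`. -/
theorem PGrow.transplant_mem {S : TAS} (hF : FinitelySelfAssembles S UFractal)
    {X : Set Pt} {t : TileType} {γ : Assembly} (h : PGrow S X t γ) {z : Pt} {t' : TileType}
    (hz : γ z = none) (ht : t' ∈ S.tiles) (ha : S.temp ≤ attachStrength S.strength γ z t')
    {α : Assembly} (hα : Reach S α) {ρ : Pt} (hρ : α ρ = some t)
    (hX : ∀ r ∈ X, α (ρ + r) = none) (hXz : α (ρ + z) = none) : ρ + z ∈ UFractal := by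
  have h' : PGrow S (insert z X) t (Function.update γ z (some t')) :=
    PGrow.step γ z t' (h.mono (Set.subset_insert z X)) hz (Set.mem_insert z X) ht ha
  obtain ⟨α', hr, h1, -⟩ := h'.transplant hα hρ (by
    intro r hr
    rcases hr with rfl | hr
    · exact hXz
    · exact hX r hr)
  have := h1 z t' (Function.update_self _ _ _)
  exact reach_sub hF hr (by rw [this]; simp)

theorem PGrow.exits {S : TAS} {X : Set Pt} {t : TileType} {γ : Assembly} (h : PGrow S X t γ)
    (B : Set Pt) : PGrow S (X ∩ B) t γ ∨ ∃ γ' r t', PGrow S (X ∩ B) t γ' ∧ r ∈ X ∧ r ∉ B ∧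
      t' ∈ S.tiles ∧ γ' r = none ∧ S.temp ≤ attachStrength S.strength γ' r t' := by
  induction h with
  | base => exact Or.inl PGrow.base
  | step γ q t' _ h0 hqX ht ha ih =>
    rcases ih with ih | ih
    · by_cases hB : q ∈ B
      · exact Or.inl (PGrow.step γ q t' ih h0 ⟨hqX, hB⟩ ht ha)
      · exact Or.inr ⟨γ, q, t', ih, hqX, hB, ht, h0, ha⟩
    · exact Or.inr ih

/-! ## The bands -/

/-- The rung was once present, with type `t`, while its band was still empty. -/
def Emp (c : ℕ → Assembly) (k : ℕ) (e h : ℤ) (t : TileType) : Prop :=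
  ∃ n, c n (rho k e h) = some t ∧ ∀ r ∈ Box k e, c n (rho k e h + r) = none

/-- The cells of the box that are in the fractal. -/
def UBox (k : ℕ) (e h : ℤ) : Set Pt := {r | r ∈ Box k e ∧ rho k e h + r ∈ UFractal}

/-- Far-reaching growth in a band. -/
def FarData (S : TAS) (c : ℕ → Assembly) (j : ℕ) (e b : ℤ) (t : TileType) : Prop :=
  Emp c (j + 1) e b t ∧ ∃ γ, PGrow S (UBox (j + 1) e b) t γ ∧
    ∃ r ∈ Box (j + 1) e, γ r ≠ none ∧ mid j ≤ -e * r.1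

/-- Growth in the lowest band that supports an attachment just above. -/
def UpData (S : TAS) (c : ℕ → Assembly) (j : ℕ) (e : ℤ) (t : TileType) : Prop :=
  Emp c (j + 1) e 0 t ∧ ∃ γ, PGrow S (Box (j + 1) e) t γ ∧
    ∃ (z : Pt) (t' : TileType), 0 < -e * z.1 ∧ -e * z.1 ≤ mid (j + 1) ∧ z.2 = 3 ^ (j + 1) ∧
      t' ∈ S.tiles ∧ γ z = none ∧ S.temp ≤ attachStrength S.strength γ z t'

open Classical in
/-- The band of an assembly together with its rung. -/
noncomputable def restr (k : ℕ) (e h : ℤ) (t : TileType) (α : Assembly) : Assembly :=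
  fun r => if r = 0 then some t else if r ∈ Box k e then α (rho k e h + r) else none

theorem zero_not_mem_Box (k : ℕ) (e : ℤ) : (0 : Pt) ∉ Box k e := by
  simp [Box]

theorem restr_zero (k : ℕ) (e h : ℤ) (t : TileType) (α : Assembly) :
    restr k e h t α 0 = some t := by
  simp [restr]

theorem restr_box {k : ℕ} {e : ℤ} (h : ℤ) (t : TileType) (α : Assembly) {r : Pt}
    (hr : r ∈ Box k e) : restr k e h t α r = α (rho k e h + r) := by
  have : r ≠ 0 := by rintro rfl; exact zero_not_mem_Box k e hr
  simp [restr, hr, this]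

theorem restr_none {k : ℕ} {e : ℤ} (h : ℤ) (t : TileType) (α : Assembly) {r : Pt}
    (hr : r ∉ Box k e) (h0 : r ≠ 0) : restr k e h t α r = none := by
  simp [restr, hr, h0]

theorem restr_congr (k : ℕ) (e h : ℤ) (t : TileType) (α β : Assembly)
    (hab : ∀ r ∈ Box k e, α (rho k e h + r) = β (rho k e h + r)) :
    restr k e h t α = restr k e h t β := by
  funext r
  by_cases h0 : r = 0
  · subst h0; rw [restr_zero, restr_zero]
  · by_cases hr : r ∈ Box k e
    · rw [restr_box h t α hr, restr_box h t β hr, hab r hr]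
    · rw [restr_none h t α hr h0, restr_none h t β hr h0]

theorem restr_empty (k : ℕ) (e h : ℤ) (t : TileType) (α : Assembly)
    (hab : ∀ r ∈ Box k e, α (rho k e h + r) = none) :
    restr k e h t α = Function.update (fun _ => none) 0 (some t) := by
  funext r
  by_cases h0 : r = 0
  · subst h0; rw [restr_zero, Function.update_self]
  · rw [Function.update_of_ne h0]
    by_cases hr : r ∈ Box k e
    · rw [restr_box h t α hr, hab r hr]
    · rw [restr_none h t α hr h0]

theorem restr_update {k : ℕ} {e : ℤ} (h : ℤ) (t t' : TileType) (α : Assembly) {r : Pt}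
    (hr : r ∈ Box k e) : restr k e h t (Function.update α (rho k e h + r) (some t')) =
      Function.update (restr k e h t α) r (some t') := by
  have hr0 : r ≠ 0 := by rintro rfl; exact zero_not_mem_Box k e hr
  funext q
  by_cases hq : q = r
  · subst hq
    rw [restr_box h t _ hr, Function.update_self, Function.update_self]
  · rw [Function.update_of_ne hq]
    by_cases h0 : q = 0
    · subst h0; rw [restr_zero, restr_zero]
    · by_cases hqB : q ∈ Box k e
      · rw [restr_box h t _ hqB, restr_box h t _ hqB, Function.update_of_ne (by simpa using hq)]
      · rw [restr_none h t _ hqB h0, restr_none h t _ hqB h0]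

/-- Either the band is empty, or it is a pure growth from its rung. -/
def BandOK (S : TAS) (c : ℕ → Assembly) (k : ℕ) (e h : ℤ) (n : ℕ) : Prop :=
  (∀ r ∈ Box k e, c n (rho k e h + r) = none) ∨
    ∃ t, Emp c k e h t ∧ c n (rho k e h) = some t ∧
      PGrow S (UBox k e h) t (restr k e h t (c n))

theorem BandOK.grow {S : TAS} {c : ℕ → Assembly} {k : ℕ} {e h : ℤ} {n : ℕ}
    (hb : BandOK S c k e h n) {r : Pt} (hr : r ∈ Box k e) (hne : c n (rho k e h + r) ≠ none) :
    ∃ t, Emp c k e h t ∧ PGrow S (UBox k e h) t (restr k e h t (c n)) := by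
  rcases hb with hb | ⟨t, h1, -, h2⟩
  · exact absurd (hb r hr) hne
  · exact ⟨t, h1, h2⟩

theorem BandOK.far {S : TAS} {c : ℕ → Assembly} {j : ℕ} {e h : ℤ} {n : ℕ}
    (hb : BandOK S c (j + 1) e h n) {r : Pt} (hr : r ∈ Box (j + 1) e)
    (hne : c n (rho (j + 1) e h + r) ≠ none) (hm : mid j ≤ -e * r.1) :
    ∃ t, FarData S c j e h t := by
  obtain ⟨t, h1, h2⟩ := hb.grow hr hne
  exact ⟨t, h1, _, h2, r, hr, by rw [restr_box h t _ hr]; exact hne, hm⟩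

/-- The support of a cell of a band comes from the band and its rung. -/
theorem support {S : TAS} (hF : FinitelySelfAssembles S UFractal) {c : ℕ → Assembly}
    (hc : IsSeq S c) (h0 : c 0 = S.seed) {j : ℕ} (hj : 1 ≤ j) {e : ℤ} (he : IsSign e)
    (hV : ∀ n, c n (4 * 3 ^ (j + 1) + mid (j + 1), 0) ≠ none →
      c n (4 * 3 ^ (j + 1) + mid (j + 1) + e, 0) ≠ none)
    (N1 : ∀ b, b = 1 ∨ b = 2 → ∀ t, ¬ FarData S c j e b t) (N0 : ∀ t, ¬ UpData S c j e t)
    {n : ℕ} (hJ : ∀ h : ℤ, h = 0 ∨ h = 1 ∨ h = 2 → BandOK S c (j + 1) e h n)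
    {h : ℤ} (hh : h = 0 ∨ h = 1 ∨ h = 2) {r : Pt} (hr : r ∈ Box (j + 1) e)
    {t' : TileType} (ht' : t' ∈ S.tiles) (hn : c n (rho (j + 1) e h + r) = none)
    (ha : S.temp ≤ attachStrength S.strength (c n) (rho (j + 1) e h + r) t')
    (hU : rho (j + 1) e h + r ∈ UFractal)
    {d : Pt} (hd : IsDir d) (hp : c n (rho (j + 1) e h + r + d) ≠ none) :
    r + d ∈ Box (j + 1) e ∨ r + d = 0 := by
  have hreach := seq_reach hc h0 n
  have hpos : (0 : ℤ) < 3 ^ (j + 1) := by positivity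
  have hmj : 1 ≤ mid j := by
    have := mid_lt (i := 0) (j := j) (by omega)
    simp only [mid] at this
    omega
  rcases nbr (j + 1) e h he hh r d hr hd (reach_sub hF hreach hp) with
    h1 | h1 | ⟨h1, h2⟩ | ⟨h1, h2, h3⟩ | ⟨h1, h2, h3⟩
  · exact Or.inl h1
  · exact Or.inr h1
  · -- the position `V`
    exfalso
    subst h1
    rw [add_assoc, h2] at hp
    have e1 : rho (j + 1) e 0 + (-e * 3 ^ (j + 1), 0) = (4 * 3 ^ (j + 1) + mid (j + 1), 0) := by
      simp [rho]
    rw [e1] at hp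
    apply hV n hp
    rw [← hn]
    congr 1
    obtain ⟨x, y⟩ := r
    obtain ⟨dx, dy⟩ := d
    simp only [Box, Set.mem_ofPred_eq, rho, Prod.mk_add_mk, Prod.mk.injEq, IsDir] at *
    generalize (3 : ℤ) ^ (j + 1) = a at *
    clear hV N1 N0 hJ ha hU
    rcases hd with ⟨rfl, rfl⟩ | ⟨rfl, rfl⟩ | ⟨rfl, rfl⟩ | ⟨rfl, rfl⟩ <;>
      rcases he with rfl | rfl <;> constructor <;> omega
  · -- upwards
    exfalso
    subst h1
    have e1 : rho (j + 1) e h + r + (0, 1) = rho (j + 1) e (h + 1) + (r.1, 0) := by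
      ext
      · simp [rho]
      · simp only [rho, Prod.snd_add]
        rw [h2]; ring
    rw [e1] at hp
    have hr' : (r.1, (0 : ℤ)) ∈ Box (j + 1) e := ⟨hr.1, hr.2.1, le_rfl, hpos⟩
    have hm : mid j ≤ -e * r.1 := by
      by_contra hc
      exact bands_apart j e h he r hr.1 (by omega) h2 hU
    obtain ⟨t, ht⟩ := (hJ (h + 1) (by omega)).far hr' hp hm
    exact N1 (h + 1) (by omega) t ht
  · -- downwards
    exfalso
    subst h1
    have e1 : rho (j + 1) e h + r + (0, -1) =
        rho (j + 1) e (h - 1) + (r.1, 3 ^ (j + 1) - 1) := by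
      ext
      · simp [rho]
      · simp only [rho, Prod.snd_add]
        rw [h2]; ring
    rw [e1] at hp
    have hr' : (r.1, (3 : ℤ) ^ (j + 1) - 1) ∈ Box (j + 1) e :=
      ⟨hr.1, hr.2.1, by dsimp only; omega, by dsimp only; omega⟩
    have hm : mid j < -e * r.1 := by
      by_contra hc
      exact bands_apart j e (h - 1) he (r.1, 3 ^ (j + 1) - 1) hr.1 (by dsimp only; omega) rfl
        (reach_sub hF hreach hp)
    rcases (show h = 1 ∨ h = 2 by omega) with rfl | rfl
    · by_cases hw : ∃ d', IsDir d' ∧ r + d' ∈ Box (j + 1) e ∧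
          c n (rho (j + 1) e 1 + (r + d')) ≠ none
      · obtain ⟨d', hd', hB, hne⟩ := hw
        have hm' : mid j ≤ -e * (r + d').1 := by
          clear hV N1 N0 hJ ha hU
          obtain ⟨x, y⟩ := r
          obtain ⟨dx, dy⟩ := d'
          simp only [Prod.mk_add_mk, Prod.mk.injEq, IsDir] at *
          rcases hd' with ⟨rfl, rfl⟩ | ⟨rfl, rfl⟩ | ⟨rfl, rfl⟩ | ⟨rfl, rfl⟩ <;>
            rcases he with rfl | rfl <;> omega
        obtain ⟨t, ht⟩ := (hJ 1 (by omega)).far hB hne hm'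
        exact N1 1 (by omega) t ht
      · push Not at hw
        obtain ⟨t, ht1, ht2⟩ := (hJ 0 (by omega)).grow hr' hp
        apply N0 t
        refine ⟨ht1, _, ht2.mono (fun r hr => hr.1), (r.1, 3 ^ (j + 1)), t', hr.1, ?_, rfl, ht',
          ?_, le_trans ha ?_⟩
        · by_contra hcon
          exact free_side (j + 1) e 1 he (Or.inl rfl) r (by dsimp only at hcon; omega) hr.2.1
            hr.2.2.1 hr.2.2.2 hU
        · apply restr_none
          · intro hB
            have := hB.2.2.2
            dsimp only at this
            omega
          · intro hB
            have := congrArg Prod.snd hB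
            simp at this
        · apply attach_mono
          intro d' hd' u hu
          have hne : c n (rho (j + 1) e 1 + r + d') ≠ none := by rw [hu]; simp
          rcases nbr (j + 1) e 1 he hh r d' hr hd' (reach_sub hF hreach hne) with
            g1 | g1 | ⟨g1, g2⟩ | ⟨g1, g2, g3⟩ | ⟨g1, g2, g3⟩
          · exact absurd (hw d' hd' g1) (by rw [← add_assoc]; exact hne)
          · exfalso
            clear hV N1 N0 hJ ha hU
            obtain ⟨x, y⟩ := r
            obtain ⟨dx, dy⟩ := d'
            simp only [Prod.mk_add_mk, Prod.mk.injEq, IsDir, Prod.mk_eq_zero] at *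
            rcases hd' with ⟨rfl, rfl⟩ | ⟨rfl, rfl⟩ | ⟨rfl, rfl⟩ | ⟨rfl, rfl⟩ <;>
              rcases he with rfl | rfl <;> omega
          · omega
          · exfalso
            have : (3 : ℤ) ^ (j + 1) = 3 * 3 ^ j := by ring
            have : (0 : ℤ) < 3 ^ j := by positivity
            omega
          · subst g1
            have e2 : (r.1, (3 : ℤ) ^ (j + 1)) + (0, -1) = (r.1, 3 ^ (j + 1) - 1) := by
              ext
              · simp
              · simp only [Prod.snd_add]; ring
            rw [e2, restr_box 0 t _ hr']
            rw [e1] at hu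
            exact hu
    · obtain ⟨t, ht⟩ := (hJ (2 - 1) (by omega)).far hr' hp hm.le
      exact N1 (2 - 1) (by omega) t ht

theorem band_step {S : TAS} (hτ : 0 < S.temp)
    (hF : FinitelySelfAssembles S UFractal) {c : ℕ → Assembly}
    (hc : IsSeq S c) (h0 : c 0 = S.seed) {j : ℕ} (hj : 1 ≤ j) {e : ℤ} (he : IsSign e)
    (hV : ∀ n, c n (4 * 3 ^ (j + 1) + mid (j + 1), 0) ≠ none →
      c n (4 * 3 ^ (j + 1) + mid (j + 1) + e, 0) ≠ none)
    (N1 : ∀ b, b = 1 ∨ b = 2 → ∀ t, ¬ FarData S c j e b t) (N0 : ∀ t, ¬ UpData S c j e t)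
    {n : ℕ} (hJ : ∀ h : ℤ, h = 0 ∨ h = 1 ∨ h = 2 → BandOK S c (j + 1) e h n) :
    ∀ h : ℤ, h = 0 ∨ h = 1 ∨ h = 2 → BandOK S c (j + 1) e h (n + 1) := by
  intro h hh
  by_cases hnew : ∃ r ∈ Box (j + 1) e, c n (rho (j + 1) e h + r) = none ∧
      c (n + 1) (rho (j + 1) e h + r) ≠ none
  · obtain ⟨r, hr, hn, hn1⟩ := hnew
    obtain ⟨t', ht', ha, hup⟩ := step_at hc hn hn1
    have hU := reach_sub hF (seq_reach hc h0 (n + 1)) hn1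
    have hsup := fun d hd hp => support hF hc h0 hj he hV N1 N0 hJ hh hr ht' hn ha hU (d := d) hd hp
    have key : ∃ t, Emp c (j + 1) e h t ∧ c n (rho (j + 1) e h) = some t ∧
        PGrow S (UBox (j + 1) e h) t (restr (j + 1) e h t (c n)) := by
      rcases hJ h hh with hemp | hk
      · obtain ⟨d, hd, hne⟩ := attach_pos _ _ _ _ (lt_of_lt_of_le hτ ha)
        rcases hsup d hd hne with g | g
        · rw [add_assoc, hemp _ g] at hne
          exact absurd rfl hne
        · rw [add_assoc, g, add_zero] at hne
          obtain ⟨t, ht⟩ := Option.ne_none_iff_exists'.1 hne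
          refine ⟨t, ⟨n, ht, hemp⟩, ht, ?_⟩
          rw [restr_empty _ _ _ _ _ hemp]
          exact PGrow.base
      · exact hk
    obtain ⟨t, hE, hρ, hG⟩ := key
    refine Or.inr ⟨t, hE, seq_mono hc (Nat.le_succ n) hρ, ?_⟩
    rw [hup, restr_update h t t' _ hr]
    refine PGrow.step _ r t' hG ?_ ⟨hr, hU⟩ ht' (le_trans ha ?_)
    · rw [restr_box h t _ hr, hn]
    · apply attach_mono
      intro d hd u hu
      rcases hsup d hd (by rw [hu]; simp) with g | g
      · rw [restr_box h t _ g, ← add_assoc, hu]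
      · rw [g, restr_zero, ← hρ, ← hu, add_assoc, g, add_zero]
  · push Not at hnew
    have hsame : ∀ r ∈ Box (j + 1) e,
        c (n + 1) (rho (j + 1) e h + r) = c n (rho (j + 1) e h + r) := by
      intro r hr
      cases hv : c n (rho (j + 1) e h + r) with
      | none => exact hnew r hr hv
      | some u => exact seq_mono hc (Nat.le_succ n) hv
    rcases hJ h hh with hemp | ⟨t, hE, hρ, hG⟩
    · exact Or.inl (fun r hr => by rw [hsame r hr, hemp r hr])
    · refine Or.inr ⟨t, hE, seq_mono hc (Nat.le_succ n) hρ, ?_⟩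
      rw [restr_congr _ _ _ _ _ _ hsame]
      exact hG

/-- The key dichotomy. -/
theorem exists_data {S : TAS} (hτ : 0 < S.temp)
    (hF : FinitelySelfAssembles S UFractal) {c : ℕ → Assembly}
    (hc : IsSeq S c) (h0 : c 0 = S.seed) (hcov : ∀ p ∈ UFractal, ∃ n, c n p ≠ none)
    {j : ℕ} (hj : 1 ≤ j) (hseed : ∀ p : Pt, 3 ^ (j + 1) ≤ p.1 → S.seed p = none) :
    ∃ e, IsSign e ∧ ((∃ b, (b = 1 ∨ b = 2) ∧ ∃ t, FarData S c j e b t) ∨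
      ∃ t, UpData S c j e t) := by
  have hpos : (0 : ℤ) < 3 ^ (j + 1) := by positivity
  have hmn := mid_nonneg (j + 1)
  have hms := mid_spec (j + 1)
  -- the direction from which `V` is supported
  have hVd : ∃ e, IsSign e ∧ ∀ n, c n (4 * 3 ^ (j + 1) + mid (j + 1), 0) ≠ none →
      c n (4 * 3 ^ (j + 1) + mid (j + 1) + e, 0) ≠ none := by
    obtain ⟨N, hN⟩ := hcov _ (axis_mem_U (4 * 3 ^ (j + 1) + mid (j + 1)) (by positivity))
    obtain ⟨n, hn, hn1⟩ := first_place
      (by rw [h0]; exact hseed _ (by dsimp only; linarith)) hN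
    obtain ⟨t', ht', ha, hup⟩ := step_at hc hn hn1
    obtain ⟨d, hd, hne⟩ := attach_pos _ _ _ _ (lt_of_lt_of_le hτ ha)
    have hU := reach_sub hF (seq_reach hc h0 n) hne
    have hs : (3 : ℤ) ^ (j + 1) = 3 * 3 ^ j := by ring
    have later : ∀ e, c n (4 * 3 ^ (j + 1) + mid (j + 1) + e, 0) ≠ none →
        ∀ m, c m (4 * 3 ^ (j + 1) + mid (j + 1), 0) ≠ none →
          c m (4 * 3 ^ (j + 1) + mid (j + 1) + e, 0) ≠ none := by
      intro e hee m hm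
      rcases le_total m n with hmn | hmn
      · exact absurd hn (seq_mono_ne hc hmn hm)
      · exact seq_mono_ne hc hmn hee
    rcases hd with rfl | rfl | rfl | rfl
    · exact ⟨1, Or.inl rfl, later 1 (by simpa using hne)⟩
    · exact ⟨-1, Or.inr rfl, later (-1) (by simpa using hne)⟩
    · exfalso
      simp only [Prod.mk_add_mk] at hU
      obtain ⟨w, hw⟩ := low_zero _ _ hU (j + 1) 4 (by ring)
      rw [hs, mul_assoc] at hw
      omega
    · exfalso
      simp only [Prod.mk_add_mk] at hU
      obtain ⟨w, hw⟩ := low_zero _ _ hU (j + 1) 4 (by ring)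
      rw [hs, mul_assoc] at hw
      omega
  obtain ⟨e, he, hV⟩ := hVd
  refine ⟨e, he, ?_⟩
  by_contra hcon
  push Not at hcon
  obtain ⟨N1, N0⟩ := hcon
  have hJ : ∀ n, ∀ h : ℤ, h = 0 ∨ h = 1 ∨ h = 2 → BandOK S c (j + 1) e h n := by
    intro n
    induction n with
    | zero =>
      intro h _
      left
      intro r hr
      rw [h0]
      apply hseed
      have h1 := hr.1
      have h2 := hr.2.1
      simp only [rho, Prod.fst_add]
      rcases he with rfl | rfl <;> linarith
    | succ n ih => exact band_step hτ hF hc h0 hj he hV N1 N0 ih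
  have hr : ((-e * mid (j + 1), 0) : Pt) ∈ Box (j + 1) e := by
    have : 0 < mid (j + 1) := by
      have := mid_nonneg j
      simp only [mid]
      omega
    refine ⟨?_, ?_, le_rfl, hpos⟩ <;> dsimp only <;> rcases he with rfl | rfl <;> linarith
  have hU : rho (j + 1) e 1 + (-e * mid (j + 1), 0) ∈ UFractal := by
    simp only [rho, Prod.mk_add_mk, one_mul, add_zero]
    rcases he with rfl | rfl
    · exact row_mem_U _ 5 (j + 1) (by linarith) 0 (by ring) le_rfl hpos (by norm_num)
    · exact row_mem_U _ 3 (j + 1) (by linarith) (2 * mid (j + 1)) (by ring) (by linarith)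
        (by linarith) (by norm_num)
  obtain ⟨n, hn⟩ := hcov _ hU
  obtain ⟨t, ht⟩ := (hJ n 1 (by omega)).far hr hn (by
    have := mid_le (i := j) (j := j + 1) (by omega)
    dsimp only
    rcases he with rfl | rfl <;> linarith)
  exact N1 1 (Or.inl rfl) t ht

/-! ## Contradictions -/

theorem up_contra {S : TAS} (hF : FinitelySelfAssembles S UFractal) {c : ℕ → Assembly}
    (hc : IsSeq S c) (h0 : c 0 = S.seed) {i j : ℕ} (hij : i < j) {e : ℤ} (he : IsSign e)
    {t : TileType} (hi : UpData S c i e t) (hj : UpData S c j e t) : False := by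
  obtain ⟨-, γ, hγ, z, t', hz1, hz2, hz3, ht', hz, ha⟩ := hi
  obtain ⟨⟨n, hn, hemp⟩, -⟩ := hj
  have hlt : (3 : ℤ) ^ (i + 1) < 3 ^ (j + 1) := pow_lt_pow_right₀ (by norm_num) (by omega)
  have hpos : (0 : ℤ) < 3 ^ (i + 1) := by positivity
  have hms := mid_spec (i + 1)
  have hmn := mid_nonneg (i + 1)
  have hmem := hγ.transplant_mem hF hz ht' ha (seq_reach hc h0 n) hn
    (fun r hr => hemp r ⟨hr.1, by linarith [hr.2.1], hr.2.2.1, by linarith [hr.2.2.2]⟩)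
    (hemp z ⟨hz1, by linarith, by linarith, by linarith⟩)
  obtain ⟨d, rfl⟩ := Nat.exists_eq_add_of_lt hij
  have e1 : i + d + 1 + 1 = i + 1 + (d + 1) := by ring
  rw [e1] at hmem
  exact no_up (i + 1) d e 0 he z hz1 hz2 hz3 hmem

theorem far_contra {S : TAS} (hτ : 0 < S.temp) (hF : FinitelySelfAssembles S UFractal)
    {c : ℕ → Assembly}
    (hc : IsSeq S c) (h0 : c 0 = S.seed) {i j : ℕ} (hij : i + 1 < j) {e : ℤ} (he : IsSign e)
    {b : ℤ} (hb : b = 1 ∨ b = 2)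
    {t : TileType} (hi : FarData S c i e b t) (hj : FarData S c j e b t) : False := by
  obtain ⟨⟨n, hn, hemp⟩, -⟩ := hi
  obtain ⟨-, γ, hγ, r₀, hr₀, hr₀γ, hr₀m⟩ := hj
  have hpos : (0 : ℤ) < 3 ^ (i + 1) := by positivity
  have hms := mid_spec (i + 1)
  have hmn : 1 ≤ mid (i + 1) := by
    have := mid_nonneg i
    simp only [mid]
    omega
  rcases hγ.exits {r | 0 < -e * r.1 ∧ -e * r.1 ≤ mid (i + 1) ∧ 0 ≤ r.2 ∧ r.2 < 3 ^ (i + 1)} with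
    h | ⟨γ', r, t', hγ', hrX, hrB, ht', hr, ha⟩
  · rcases h.dom r₀ hr₀γ with rfl | h
    · exact zero_not_mem_Box _ _ hr₀
    · have h1 := h.2.2.1
      have := mid_lt hij
      linarith
  · obtain ⟨d, hd, hne⟩ := attach_pos _ _ _ _ (lt_of_lt_of_le hτ ha)
    have hcase : (0 < -e * r.1 ∧ -e * r.1 ≤ mid (i + 1) ∧ r.2 = 3 ^ (i + 1)) ∨
        (-e * r.1 = mid (i + 1) + 1 ∧ 0 ≤ r.2 ∧ r.2 < 3 ^ (i + 1)) := by
      have hBox := hrX.1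
      have hnb : r + d = 0 ∨
          (0 < -e * (r + d).1 ∧ -e * (r + d).1 ≤ mid (i + 1) ∧ 0 ≤ (r + d).2 ∧
            (r + d).2 < 3 ^ (i + 1)) := by
        rcases hγ'.dom _ hne with g | g
        · exact Or.inl g
        · exact Or.inr g.2
      clear hne ha hr hrX hγ hγ' hemp hn hr₀ hr₀m
      obtain ⟨x, y⟩ := r
      obtain ⟨dx, dy⟩ := d
      simp only [Box, Set.mem_ofPred_eq, Prod.mk_add_mk, Prod.mk.injEq, IsDir,
        Prod.mk_eq_zero] at *
      generalize (3 : ℤ) ^ (j + 1) = a' at *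
      generalize (3 : ℤ) ^ (i + 1) = a at *
      rcases hd with ⟨rfl, rfl⟩ | ⟨rfl, rfl⟩ | ⟨rfl, rfl⟩ | ⟨rfl, rfl⟩ <;>
        rcases he with rfl | rfl <;> omega
    rcases hcase with ⟨g1, g2, g3⟩ | ⟨g1, g2, g3⟩
    · obtain ⟨d, rfl⟩ := Nat.exists_eq_add_of_lt (show i < j by omega)
      have hmem := hrX.2
      have e1 : i + d + 1 + 1 = i + 1 + (d + 1) := by ring
      rw [e1] at hmem
      exact no_up (i + 1) d e b he r g1 g2 g3 hmem
    · refine free_side (i + 1) e b he hb r (by linarith) (by linarith) g2 g3 ?_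
      refine hγ'.transplant_mem hF hr ht' ha (seq_reach hc h0 n) hn ?_ ?_
      · intro q hq
        obtain ⟨q1, q2, q3, q4⟩ := hq.2
        exact hemp q ⟨q1, by linarith, q3, q4⟩
      · exact hemp r ⟨by linarith, by linarith, g2, g3⟩

theorem emp_tiles {S : TAS} {c : ℕ → Assembly} (hc : IsSeq S c) (h0 : c 0 = S.seed)
    {k : ℕ} {e h : ℤ} {t : TileType} (hE : Emp c k e h t) : t ∈ S.tiles := by
  obtain ⟨n, hn, -⟩ := hE
  exact reach_tiles (seq_reach hc h0 n) _ _ hn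

theorem seed_bound (S : TAS) : ∃ j₀ : ℕ, ∀ p : Pt, 3 ^ j₀ ≤ p.1 → S.seed p = none := by
  obtain ⟨M, hM⟩ := (S.seed_finite.image Prod.fst).bddAbove
  refine ⟨M.toNat, fun p hp => ?_⟩
  by_contra hne
  have h1 : p.1 ≤ M := hM ⟨p, hne, rfl⟩
  have h2 := lt_three_pow M M.toNat (by omega)
  linarith

/-- The data attached to a scale. -/
def ScaleData (S : TAS) (c : ℕ → Assembly) (j : ℕ) (q : ℤ × ℤ × TileType) : Prop :=
  IsSign q.1 ∧ (((q.2.1 = 1 ∨ q.2.1 = 2) ∧ FarData S c j q.1 q.2.1 q.2.2) ∨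
    (q.2.1 = 0 ∧ UpData S c j q.1 q.2.2))

theorem scale_contra {S : TAS} (hτ : 0 < S.temp) (hF : FinitelySelfAssembles S UFractal)
    {c : ℕ → Assembly} (hc : IsSeq S c) (h0 : c 0 = S.seed) {i j : ℕ} (hij : i + 1 < j)
    {q : ℤ × ℤ × TileType} (hi : ScaleData S c i q) (hj : ScaleData S c j q) : False := by
  obtain ⟨he, hi⟩ := hi
  obtain ⟨-, hj⟩ := hj
  rcases hi with ⟨hb, hi⟩ | ⟨hb, hi⟩
  · rcases hj with ⟨-, hj⟩ | ⟨hb', -⟩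
    · exact far_contra hτ hF hc h0 hij he hb hi hj
    · omega
  · rcases hj with ⟨hb', -⟩ | ⟨-, hj⟩
    · omega
    · exact up_contra hF hc h0 (by omega) he hi hj

/-- No aTAM tile assembly system finitely self-assembles the
U fractal `𝐔`. -/
theorem uFractal_not_finitelySelfAssembles :
    ∀ S : TAS, ¬ FinitelySelfAssembles S UFractal := by
  intro S hF
  obtain ⟨β, ⟨c, h0, hc, -, hcov'⟩, hβ⟩ :=
    hF S.seed (reach_producible Relation.ReflTransGen.refl) S.seed_finite
  have hcov : ∀ p ∈ UFractal, ∃ n, c n p ≠ none := by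
    intro p hp
    rw [← hβ] at hp
    obtain ⟨t, ht⟩ := Option.ne_none_iff_exists'.1 hp
    obtain ⟨n, hn⟩ := hcov' p t ht
    exact ⟨n, by rw [hn]; simp⟩
  rcases Nat.eq_zero_or_pos S.temp with hτ | hτ
  · -- temperature zero
    obtain ⟨n, hn⟩ := hcov _ (axis_mem_U 0 le_rfl)
    obtain ⟨t, ht⟩ := Option.ne_none_iff_exists'.1 hn
    have htS := reach_tiles (seq_reach hc h0 n) _ _ ht
    have hbad : ((-1, 0) : Pt) ∉ UFractal := by
      rw [mem_U_iff]
      rintro ⟨h, -⟩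
      norm_num at h
    cases hs : S.seed (-1, 0) with
    | some u => exact hbad (reach_sub hF Relation.ReflTransGen.refl (by rw [hs]; simp))
    | none =>
      have hr : Reach S (Function.update S.seed (-1, 0) (some t)) :=
        Relation.ReflTransGen.single ⟨(-1, 0), t, htS, hs, by rw [hτ]; exact Nat.zero_le _, rfl⟩
      exact hbad (reach_sub hF hr (by rw [Function.update_self]; simp))
  · obtain ⟨j₀, hj₀⟩ := seed_bound S
    have hdata : ∀ i : ℕ, ∃ q ∈ (({1, -1} : Finset ℤ) ×ˢ ({0, 1, 2} : Finset ℤ) ×ˢ S.tiles),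
        ScaleData S c (j₀ + 1 + 2 * i) q := by
      intro i
      obtain ⟨e, he, h⟩ := exists_data hτ hF hc h0 hcov (j := j₀ + 1 + 2 * i) (by omega) (by
        intro p hp
        apply hj₀
        exact le_trans (pow_le_pow_right₀ (by norm_num) (by omega)) hp)
      have he' : e ∈ ({1, -1} : Finset ℤ) := by
        rcases he with rfl | rfl <;> simp
      rcases h with ⟨b, hb, t, ht⟩ | ⟨t, ht⟩
      · refine ⟨(e, b, t), ?_, he, Or.inl ⟨hb, ht⟩⟩
        simp only [Finset.mem_product]
        refine ⟨he', ?_, emp_tiles hc h0 ht.1⟩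
        rcases hb with rfl | rfl <;> simp
      · refine ⟨(e, 0, t), ?_, he, Or.inr ⟨rfl, ht⟩⟩
        simp only [Finset.mem_product]
        exact ⟨he', by simp, emp_tiles hc h0 ht.1⟩
    choose f hf1 hf2 using hdata
    obtain ⟨i, j, hne, heq⟩ := Finite.exists_ne_map_eq_of_infinite
      (fun i => (⟨f i, hf1 i⟩ :
        {q // q ∈ (({1, -1} : Finset ℤ) ×ˢ ({0, 1, 2} : Finset ℤ) ×ˢ S.tiles)}))
    have heq' : f i = f j := congrArg Subtype.val heq
    rcases lt_or_gt_of_ne hne with h | h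
    · exact scale_contra hτ hF hc h0 (j := j₀ + 1 + 2 * j) (by omega) (hf2 i) (heq' ▸ hf2 j)
    · exact scale_contra hτ hF hc h0 (j := j₀ + 1 + 2 * i) (by omega) (hf2 j) (heq' ▸ hf2 i)
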